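/- Let n > 2m ≥ 2 be integers, let k₂ be an integer with 1 ≤ k₂ ≤ n, let 0 < ε < k₂, and let β > 2m + k₂. Suppose f : ℝⁿ → ℂ is measurable, |f(y)| ≤ C₀⟨y⟩^{2m−n−β} for almost every y, and ∫_{ℝⁿ} y^α f(y) dy = 0 for every multi-index α with |α| ≤ k₂ − 1. Then the function φ(x) := ∫_{ℝⁿ} |x−y|^{k₂−ε−n} f(y) dy satisfies |φ(x)| ≤ C ⟨x⟩^{-n−ε} for all x ∈ ℝⁿ, with C depending only on n, m, k₂, ε, β, C₀. -/

import Mathlib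

open MeasureTheory

/-!
Let `p` be the Taylor polynomial of degree `k - 1` of `y ↦ ‖x - y‖ ^ (-a)` at `0`. The vanishing
moments allow the kernel to be replaced by `‖x - y‖ ^ (-a) - p y`. Where `⟨y⟩ < δ⟨x⟩`, this
remainder is at most a multiple of `⟨x⟩ ^ (-a - k) * ⟨y⟩ ^ k`, with uniform constants because the
kernel is homogeneous and rotation invariant. Elsewhere `p` and the kernel at distance at least
`⟨x⟩` from its singularity obey the same bound. Both contributions are integrable against
`⟨y⟩ ^ (-s)`. Only the singular part `‖x - y‖ < ⟨x⟩` remains, where the weight is at most a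
multiple of `⟨x⟩ ^ (-s)` and the kernel has integral `O(⟨x⟩ ^ (n - a))`; since `s > n + k`, this too
is `O(⟨x⟩ ^ (-a - k))`.
-/

open Module (finrank)

section JapaneseBracket

variable {E : Type*} [NormedAddCommGroup E]

/-- The Japanese bracket `⟨x⟩ = (1 + ‖x‖²)^{1/2}`, in powers of which decay at infinity is
measured. -/
noncomputable def japaneseBracket (x : E) : ℝ := √(1 + ‖x‖ ^ 2)

theorem one_le_japaneseBracket (x : E) : 1 ≤ japaneseBracket x :=
  Real.one_le_sqrt.2 (le_add_of_nonneg_right (sq_nonneg _))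

theorem japaneseBracket_pos (x : E) : 0 < japaneseBracket x :=
  one_pos.trans_le (one_le_japaneseBracket x)

theorem norm_le_japaneseBracket (x : E) : ‖x‖ ≤ japaneseBracket x :=
  Real.le_sqrt_of_sq_le (le_add_of_nonneg_left zero_le_one)

theorem norm_pow_le_japaneseBracket_pow {i k : ℕ} (hi : i ≤ k) (y : E) :
    ‖y‖ ^ i ≤ japaneseBracket y ^ k :=
  (pow_le_pow_left₀ (norm_nonneg y) (norm_le_japaneseBracket y) i).trans
    (pow_le_pow_right₀ (one_le_japaneseBracket y) hi)

theorem japaneseBracket_le_sqrt_two_mul_max (x : E) : japaneseBracket x ≤ √2 * max 1 ‖x‖ := by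
  refine Real.sqrt_le_iff.2 ⟨by positivity, ?_⟩
  rw [mul_pow, Real.sq_sqrt zero_le_two]
  have hone : 1 ≤ max 1 ‖x‖ ^ 2 := one_le_pow₀ (le_max_left _ _)
  have hnorm : ‖x‖ ^ 2 ≤ max 1 ‖x‖ ^ 2 := by gcongr; exact le_max_right _ _
  linarith

theorem norm_rpow_neg_le_sqrt_two_rpow_mul {x : E} (hx : 1 ≤ ‖x‖) {b : ℝ} (hb : 0 ≤ b) :
    ‖x‖ ^ (-b) ≤ √2 ^ b * japaneseBracket x ^ (-b) := by
  have hx₀ : 0 < ‖x‖ := one_pos.trans_le hx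
  have hJ := japaneseBracket_pos x
  rw [Real.rpow_neg hx₀.le, Real.rpow_neg hJ.le, ← div_eq_mul_inv, ← one_div,
    div_le_div_iff₀ (by positivity) (by positivity), one_mul,
    ← Real.mul_rpow (by positivity) hx₀.le]
  refine Real.rpow_le_rpow hJ.le ?_ hb
  simpa only [max_eq_right hx] using japaneseBracket_le_sqrt_two_mul_max x

theorem japaneseBracket_pow_mul_rpow_neg (y : E) (k : ℕ) (s : ℝ) :
    japaneseBracket y ^ k * japaneseBracket y ^ (-s) = japaneseBracket y ^ (-(s - k)) := by
  rw [← Real.rpow_natCast, ← Real.rpow_add (japaneseBracket_pos y)]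
  ring_nf

theorem integrable_japaneseBracket_rpow_neg [NormedSpace ℝ E] [FiniteDimensional ℝ E]
    [MeasurableSpace E] [BorelSpace E] {μ : Measure E} [μ.IsAddHaarMeasure] {s : ℝ}
    (hs : finrank ℝ E < s) : Integrable (fun y : E => japaneseBracket y ^ (-s)) μ := by
  refine (integrable_rpow_neg_one_add_norm_sq hs).congr (.of_forall fun y => ?_)
  exact Real.rpow_div_two_eq_sqrt _ (by positivity)

end JapaneseBracket

section TruncatedKernel

variable {E : Type*} [NormedAddCommGroup E]

/-- The kernel `‖z‖ ^ (-a)` cut off to the ball of radius `r`: the part of the kernel that carries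
its singularity. -/
noncomputable def truncatedKernel (a r : ℝ) (z : E) : ℝ :=
  (Metric.ball 0 r).indicator (fun z => ‖z‖ ^ (-a)) z

theorem truncatedKernel_nonneg (a r : ℝ) (z : E) : 0 ≤ truncatedKernel a r z :=
  Set.indicator_nonneg (fun _ _ => by positivity) z

theorem norm_rpow_neg_le_truncatedKernel_add {a r : ℝ} {k : ℕ} (hak : 0 ≤ a + k) (hr : 0 < r)
    (z : E) : ‖z‖ ^ (-a) ≤ truncatedKernel a r z + r ^ (-a - k) * ‖z‖ ^ k := by
  by_cases hz : ‖z‖ < r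
  · rw [truncatedKernel, Set.indicator_of_mem (mem_ball_zero_iff.2 hz)]
    exact le_add_of_nonneg_right (by positivity)
  · have hz : r ≤ ‖z‖ := not_lt.1 hz
    have hz₀ : 0 < ‖z‖ := hr.trans_le hz
    calc ‖z‖ ^ (-a) = ‖z‖ ^ (-a - k) * ‖z‖ ^ k := by
          rw [← Real.rpow_natCast, ← Real.rpow_add hz₀, sub_add_cancel]
      _ ≤ r ^ (-a - k) * ‖z‖ ^ k := by
          gcongr ?_ * _
          exact Real.rpow_le_rpow_of_nonpos hr hz (by linarith)
      _ ≤ _ := le_add_of_nonneg_left (truncatedKernel_nonneg a r z)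

theorem truncatedKernel_eq_rpow_mul [NormedSpace ℝ E] (a : ℝ) {r : ℝ} (hr : 0 < r) (z : E) :
    truncatedKernel a r z = r ^ (-a) * truncatedKernel a 1 (r⁻¹ • z) := by
  classical
  have hnorm : ‖r⁻¹ • z‖ = r⁻¹ * ‖z‖ := by rw [norm_smul, norm_inv, Real.norm_of_nonneg hr.le]
  simp only [truncatedKernel, Set.indicator_apply, mem_ball_zero_iff, hnorm,
    inv_mul_lt_one₀ hr, mul_ite, mul_zero]
  rw [← Real.mul_rpow hr.le (by positivity), mul_inv_cancel_left₀ hr.ne']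

variable [NormedSpace ℝ E] [FiniteDimensional ℝ E] [MeasurableSpace E] [BorelSpace E]
  {μ : Measure E} [μ.IsAddHaarMeasure]

theorem integrable_truncatedKernel [Nontrivial E] {a : ℝ} (ha : a < finrank ℝ E) (r : ℝ) :
    Integrable (truncatedKernel (E := E) a r) μ := by
  refine IntegrableOn.integrable_indicator ?_ Metric.isOpen_ball.measurableSet
  refine integrableOn_ball_of_norm_le_rpow (C := 1) Module.finrank_pos ha
    (.of_forall fun z => ?_)
    (measurable_norm.pow_const (-a)).aestronglyMeasurable
  rw [one_mul, Real.norm_of_nonneg (by positivity)]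

theorem integral_truncatedKernel (a : ℝ) {r : ℝ} (hr : 0 < r) :
    ∫ z : E, truncatedKernel a r z ∂μ =
      r ^ (finrank ℝ E - a) * ∫ z : E, truncatedKernel a 1 z ∂μ := by
  simp_rw [truncatedKernel_eq_rpow_mul a hr]
  rw [integral_const_mul, Measure.integral_comp_inv_smul_of_nonneg μ _ hr.le, smul_eq_mul,
    ← mul_assoc, ← Real.rpow_natCast, ← Real.rpow_add hr, neg_add_eq_sub]

end TruncatedKernel

section Taylor

theorem norm_partialSum_le_mul_one_add_norm_pow {𝕜 E F : Type*} [NontriviallyNormedField 𝕜]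
    [NormedAddCommGroup E] [NormedSpace 𝕜 E] [NormedAddCommGroup F] [NormedSpace 𝕜 F]
    (p : FormalMultilinearSeries 𝕜 E F) (k : ℕ) (v : E) :
    ‖p.partialSum k v‖ ≤ (∑ i ∈ Finset.range k, ‖p i‖) * (1 + ‖v‖) ^ k := by
  rw [FormalMultilinearSeries.partialSum, Finset.sum_mul]
  refine norm_sum_le_of_le _ fun i hi => ?_
  have hv : 1 ≤ 1 + ‖v‖ := le_add_of_nonneg_right (norm_nonneg v)
  calc ‖p i fun _ => v‖ ≤ ‖p i‖ * ‖v‖ ^ i := by simpa using (p i).le_opNorm fun _ => v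
    _ ≤ ‖p i‖ * (1 + ‖v‖) ^ i := by gcongr; linarith
    _ ≤ ‖p i‖ * (1 + ‖v‖) ^ k := by
        gcongr
        exact (Finset.mem_range.1 hi).le

variable {E : Type*} [NormedAddCommGroup E] [InnerProductSpace ℝ E]

theorem analyticAt_norm_rpow (b : ℝ) {e : E} (he : e ≠ 0) :
    AnalyticAt ℝ (fun z : E => ‖z‖ ^ b) e := by
  have hsmooth : ContDiffAt ℝ ⊤ (fun z : E => ‖z‖ ^ b) e :=
    (contDiffAt_norm ℝ he).rpow_const_of_ne (norm_ne_zero_iff.2 he)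
  exact hsmooth.analyticAt

theorem exists_norm_eq_div_and_norm_sub_eq_mul {e x : E} (he : ‖e‖ = 1) (hx : x ≠ 0) :
    ∃ L : E →L[ℝ] E, (∀ y, ‖L y‖ = ‖y‖ / ‖x‖) ∧ ∀ y, ‖x - y‖ = ‖x‖ * ‖e + L y‖ := by
  have hr : 0 < ‖x‖ := norm_pos_iff.2 hx
  let R : E ≃ₗᵢ[ℝ] E := (ℝ ∙ (x - ‖x‖ • e))ᗮ.reflection
  have hRx : R x = ‖x‖ • e := Submodule.reflection_sub (by rw [norm_smul, norm_norm, he, mul_one])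
  let L : E →L[ℝ] E := (-‖x‖⁻¹) • (R.toContinuousLinearEquiv : E →L[ℝ] E)
  have hL (y : E) : L y = (-‖x‖⁻¹) • R y := rfl
  refine ⟨L, fun y => ?_, fun y => ?_⟩
  · rw [hL, norm_smul, R.norm_map, norm_neg, norm_inv, norm_norm, inv_mul_eq_div]
  · have hfactor : R (x - y) = ‖x‖ • (e + L y) := by
      rw [map_sub, hRx, hL, smul_add, smul_smul, mul_neg, mul_inv_cancel₀ hr.ne', neg_one_smul,
        sub_eq_add_neg]
    rw [← R.norm_map, hfactor, norm_smul, norm_norm]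

theorem exists_abs_norm_add_rpow_sub_partialSum_le (b : ℝ) (k : ℕ) {e : E}
    (he : e ≠ 0) : ∃ q : FormalMultilinearSeries ℝ E ℝ, ∃ δ > 0, ∃ C ≥ 0, ∀ v, ‖v‖ < δ →
      |‖e + v‖ ^ b - q.partialSum k v| ≤ C * ‖v‖ ^ k := by
  obtain ⟨q, hq⟩ := analyticAt_norm_rpow b he
  obtain ⟨C, hC, hO⟩ := (hq.isBigO_sub_partialSum_pow k).exists_nonneg
  obtain ⟨δ, hδ, hball⟩ := Metric.eventually_nhds_iff.1 hO.bound
  refine ⟨q, δ, hδ, C, hC, fun v hv => ?_⟩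
  simpa only [Real.norm_eq_abs, abs_pow, abs_norm] using hball ((dist_zero_right v).trans_lt hv)

-- All `x` share the expansion at one unit vector, which makes `δ` and `C` uniform: the kernel is
-- homogeneous and invariant under reflections.
theorem exists_partialSum_near_kernel_of_ne_zero [Nontrivial E] (a : ℝ) (k : ℕ) :
    ∃ δ > 0, ∃ C ≥ 0, ∀ x : E, x ≠ 0 → ∃ p : FormalMultilinearSeries ℝ E ℝ,
      (∀ y, ‖y‖ < δ * ‖x‖ →
        |‖x - y‖ ^ (-a) - p.partialSum k y| ≤ C * ‖x‖ ^ (-a - k) * ‖y‖ ^ k) ∧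
      ∀ y, |p.partialSum k y| ≤ C * ‖x‖ ^ (-a - k) * (‖x‖ + ‖y‖) ^ k := by
  obtain ⟨e, he⟩ := exists_norm_eq E zero_le_one
  obtain ⟨q, δ, hδ, C, hC, hq⟩ := exists_abs_norm_add_rpow_sub_partialSum_le (-a) k
    (norm_ne_zero_iff.1 (he.trans_ne one_ne_zero))
  set S := ∑ i ∈ Finset.range k, ‖q i‖
  have hS : 0 ≤ S := by positivity
  refine ⟨δ, hδ, C + S, by positivity, fun x hx => ?_⟩
  obtain ⟨L, hLnorm, hLsub⟩ := exists_norm_eq_div_and_norm_sub_eq_mul he hx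
  have hr : 0 < ‖x‖ := norm_pos_iff.2 hx
  have hscale (t : ℝ) : ‖x‖ ^ (-a) * (t / ‖x‖) ^ k = ‖x‖ ^ (-a - k) * t ^ k := by
    rw [div_pow, Real.rpow_sub hr, Real.rpow_natCast, mul_div_assoc', div_mul_eq_mul_div]
  let p : FormalMultilinearSeries ℝ E ℝ := ‖x‖ ^ (-a) • q.compContinuousLinearMap L
  have hp (y : E) : p.partialSum k y = ‖x‖ ^ (-a) * q.partialSum k (L y) := by
    simp only [FormalMultilinearSeries.partialSum, Finset.mul_sum]
    rfl
  refine ⟨p, fun y hy => ?_, fun y => ?_⟩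
  · have hLy : ‖L y‖ < δ := by rwa [hLnorm, div_lt_iff₀ hr]
    calc |‖x - y‖ ^ (-a) - p.partialSum k y|
        = ‖x‖ ^ (-a) * |‖e + L y‖ ^ (-a) - q.partialSum k (L y)| := by
          rw [hp, hLsub, Real.mul_rpow hr.le (norm_nonneg _), ← mul_sub, abs_mul,
            abs_of_nonneg (by positivity)]
      _ ≤ ‖x‖ ^ (-a) * (C * ‖L y‖ ^ k) := by gcongr; exact hq _ hLy
      _ = C * ‖x‖ ^ (-a - k) * ‖y‖ ^ k := by rw [mul_left_comm, hLnorm, hscale, mul_assoc]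
      _ ≤ (C + S) * ‖x‖ ^ (-a - k) * ‖y‖ ^ k := by gcongr; exact le_add_of_nonneg_right hS
  · calc |p.partialSum k y| = ‖x‖ ^ (-a) * |q.partialSum k (L y)| := by
          rw [hp, abs_mul, abs_of_nonneg (by positivity)]
      _ ≤ ‖x‖ ^ (-a) * (S * (1 + ‖L y‖) ^ k) := by
          gcongr; exact norm_partialSum_le_mul_one_add_norm_pow q k (L y)
      _ = S * ‖x‖ ^ (-a - k) * (‖x‖ + ‖y‖) ^ k := by
          rw [mul_left_comm, hLnorm, one_add_div hr.ne', hscale, mul_assoc]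
      _ ≤ (C + S) * ‖x‖ ^ (-a - k) * (‖x‖ + ‖y‖) ^ k := by
          gcongr; exact le_add_of_nonneg_left hC

theorem exists_partialSum_near_kernel [Nontrivial E] {a : ℝ} {k : ℕ}
    (hak : 0 ≤ a + k) :
    ∃ δ > 0, ∃ C ≥ 0, ∀ x : E, ∃ p : FormalMultilinearSeries ℝ E ℝ,
      (∀ y, japaneseBracket y < δ * japaneseBracket x →
        |‖x - y‖ ^ (-a) - p.partialSum k y| ≤
          C * japaneseBracket x ^ (-a - k) * japaneseBracket y ^ k) ∧
      ∀ y, |p.partialSum k y| ≤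
        C * japaneseBracket x ^ (-a - k) * (japaneseBracket x + japaneseBracket y) ^ k := by
  obtain ⟨δ, hδ, C, hC, htaylor⟩ := exists_partialSum_near_kernel_of_ne_zero (E := E) a k
  refine ⟨min δ 1 / √2, by positivity, C * √2 ^ (a + k), by positivity, fun x => ?_⟩
  have hJx := japaneseBracket_pos x
  have hJ (y : E) := norm_le_japaneseBracket y
  have hcut : min δ 1 / √2 * japaneseBracket x ≤ min δ 1 * max 1 ‖x‖ := by
    rw [div_mul_eq_mul_div, div_le_iff₀ (by positivity), mul_assoc, mul_comm (max 1 ‖x‖)]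
    gcongr
    exact japaneseBracket_le_sqrt_two_mul_max x
  rcases le_total ‖x‖ 1 with hx | hx
  -- no `y` satisfies `⟨y⟩ < min δ 1 / √2 * ⟨x⟩` here, so the zero polynomial will do
  · rw [max_eq_left hx, mul_one] at hcut
    refine ⟨0, fun y hy => absurd hy (not_lt.2 ?_), fun y => ?_⟩
    · exact hcut.trans ((min_le_right _ _).trans (one_le_japaneseBracket y))
    · have hJy := japaneseBracket_pos y
      have hzero : (0 : FormalMultilinearSeries ℝ E ℝ).partialSum k y = 0 :=
        Finset.sum_eq_zero fun _ _ => rfl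
      rw [hzero, abs_zero]
      positivity
  · rw [max_eq_right hx] at hcut
    obtain ⟨p, hnear, hall⟩ := htaylor x (norm_pos_iff.1 (one_pos.trans_le hx))
    have hpow : ‖x‖ ^ (-a - k) ≤ √2 ^ (a + k) * japaneseBracket x ^ (-a - k) := by
      simpa only [neg_add'] using norm_rpow_neg_le_sqrt_two_rpow_mul hx hak
    refine ⟨p, fun y hy => ?_, fun y => ?_⟩
    · have hy' : ‖y‖ < δ * ‖x‖ :=
        calc ‖y‖ ≤ japaneseBracket y := hJ y
          _ < min δ 1 * ‖x‖ := hy.trans_le hcut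
          _ ≤ δ * ‖x‖ := by gcongr; exact min_le_left _ _
      refine (hnear y hy').trans ?_
      rw [mul_assoc C (√2 ^ _)]
      gcongr
      exact hJ y
    · refine (hall y).trans ?_
      rw [mul_assoc C (√2 ^ _)]
      gcongr
      exacts [hJ x, hJ y]

theorem exists_abs_kernel_sub_partialSum_le [Nontrivial E] {a : ℝ} {k : ℕ}
    (hak : 0 ≤ a + k) :
    ∃ δ > 0, ∃ C ≥ 0, ∀ x : E, ∃ p : FormalMultilinearSeries ℝ E ℝ, ∀ y,
      (japaneseBracket y < δ * japaneseBracket x →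
        |‖x - y‖ ^ (-a) - p.partialSum k y| ≤
          C * (japaneseBracket x ^ (-a - k) * japaneseBracket y ^ k)) ∧
      (δ * japaneseBracket x ≤ japaneseBracket y →
        |‖x - y‖ ^ (-a) - p.partialSum k y| ≤
          C * (japaneseBracket x ^ (-a - k) * japaneseBracket y ^ k) +
            truncatedKernel a (japaneseBracket x) (x - y)) := by
  obtain ⟨δ, hδ, C, hC, htaylor⟩ := exists_partialSum_near_kernel (E := E) hak
  set B := (1 + C) * (δ⁻¹ + 1) ^ k
  have hCB : C ≤ B := (le_add_of_nonneg_left zero_le_one).trans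
    (le_mul_of_one_le_right (by positivity)
      (one_le_pow₀ (le_add_of_nonneg_left (by positivity))))
  refine ⟨δ, hδ, B, hC.trans hCB, fun x => ?_⟩
  obtain ⟨p, hnear, hall⟩ := htaylor x
  refine ⟨p, fun y => ?_⟩
  have hJx := japaneseBracket_pos x
  have hJy := japaneseBracket_pos y
  have hsub : ‖x - y‖ ≤ japaneseBracket x + japaneseBracket y := (norm_sub_le x y).trans
    (add_le_add (norm_le_japaneseBracket x) (norm_le_japaneseBracket y))
  have hkernel := norm_rpow_neg_le_truncatedKernel_add hak hJx (x - y)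
  set X := japaneseBracket x
  set Y := japaneseBracket y
  set V := truncatedKernel a X (x - y)
  refine ⟨fun hy => ?_, fun hy => ?_⟩
  · rw [← mul_assoc]
    exact (hnear y hy).trans (by gcongr)
  · have hsum : X + Y ≤ (δ⁻¹ + 1) * Y := by
      rw [add_mul, one_mul, inv_mul_eq_div]
      gcongr
      rwa [le_div_iff₀' hδ]
    calc |‖x - y‖ ^ (-a) - p.partialSum k y| ≤ ‖x - y‖ ^ (-a) + |p.partialSum k y| := by
          simpa only [abs_of_nonneg (Real.rpow_nonneg (norm_nonneg _) _)] using
            abs_sub (‖x - y‖ ^ (-a)) (p.partialSum k y)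
      _ ≤ (V + X ^ (-a - k) * (X + Y) ^ k) + C * X ^ (-a - k) * (X + Y) ^ k := by
          gcongr
          · exact hkernel.trans (by gcongr)
          · exact hall y
      _ = (1 + C) * X ^ (-a - k) * (X + Y) ^ k + V := by ring
      _ ≤ (1 + C) * X ^ (-a - k) * ((δ⁻¹ + 1) * Y) ^ k + V := by gcongr
      _ = B * (X ^ (-a - k) * Y ^ k) + V := by rw [mul_pow]; ring

theorem exists_abs_kernel_sub_partialSum_mul_le [Nontrivial E]
    {a s : ℝ} {k : ℕ} (hak : 0 ≤ a + k) (hs : 0 ≤ s) :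
    ∃ C > 0, ∀ x : E, ∃ p : FormalMultilinearSeries ℝ E ℝ, ∀ y,
      |‖x - y‖ ^ (-a) - p.partialSum k y| * japaneseBracket y ^ (-s) ≤
        C * (japaneseBracket x ^ (-a - k) * japaneseBracket y ^ (-(s - k)) +
          japaneseBracket x ^ (-s) * truncatedKernel a (japaneseBracket x) (x - y)) := by
  obtain ⟨δ, hδ, C, hC, htaylor⟩ := exists_abs_kernel_sub_partialSum_le (E := E) hak
  have hC' : C ≤ C + δ ^ (-s) := le_add_of_nonneg_right (by positivity)
  refine ⟨C + δ ^ (-s), by positivity, fun x => ?_⟩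
  obtain ⟨p, hp⟩ := htaylor x
  refine ⟨p, fun y => ?_⟩
  obtain ⟨hnear, hfar⟩ := hp y
  have hJx := japaneseBracket_pos x
  have hJy := japaneseBracket_pos y
  have hV := truncatedKernel_nonneg a (japaneseBracket x) (x - y)
  rw [← japaneseBracket_pow_mul_rpow_neg]
  set X := japaneseBracket x
  set Y := japaneseBracket y
  set V := truncatedKernel a X (x - y)
  rcases lt_or_ge Y (δ * X) with hy | hy
  · calc |‖x - y‖ ^ (-a) - p.partialSum k y| * Y ^ (-s)
        ≤ C * (X ^ (-a - k) * Y ^ k) * Y ^ (-s) := by gcongr; exact hnear hy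
      _ = C * (X ^ (-a - k) * (Y ^ k * Y ^ (-s))) := by ring
      _ ≤ (C + δ ^ (-s)) * (X ^ (-a - k) * (Y ^ k * Y ^ (-s)) + X ^ (-s) * V) := by
          gcongr
          exact le_add_of_nonneg_right (by positivity)
  · have hweight : Y ^ (-s) ≤ δ ^ (-s) * X ^ (-s) := by
      rw [← Real.mul_rpow hδ.le hJx.le]
      exact Real.rpow_le_rpow_of_nonpos (by positivity) hy (neg_nonpos.2 hs)
    calc |‖x - y‖ ^ (-a) - p.partialSum k y| * Y ^ (-s)
        ≤ (C * (X ^ (-a - k) * Y ^ k) + V) * Y ^ (-s) := by gcongr; exact hfar hy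
      _ = C * (X ^ (-a - k) * (Y ^ k * Y ^ (-s))) + V * Y ^ (-s) := by ring
      _ ≤ C * (X ^ (-a - k) * (Y ^ k * Y ^ (-s))) + V * (δ ^ (-s) * X ^ (-s)) := by gcongr
      _ = C * (X ^ (-a - k) * (Y ^ k * Y ^ (-s))) + δ ^ (-s) * (X ^ (-s) * V) := by ring
      _ ≤ (C + δ ^ (-s)) * (X ^ (-a - k) * (Y ^ k * Y ^ (-s)))
            + (C + δ ^ (-s)) * (X ^ (-s) * V) := by
          gcongr
          exact le_add_of_nonneg_left hC
      _ = _ := (mul_add _ _ _).symm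

end Taylor

section Moments

variable {E : Type*} [NormedAddCommGroup E] [NormedSpace ℝ E] [MeasurableSpace E] {μ : Measure E}
  {F : Type*} [NormedAddCommGroup F] [NormedSpace ℝ F] {f : E → F} {k : ℕ}

/-- All moments of `f` of order less than `k` vanish. The monomials of degree `i` are replaced by
the homogeneous polynomials `y ↦ M (y, …, y)` attached to `i`-linear forms `M`, so that no
coordinates are needed. -/
def HasVanishingMoments (k : ℕ) (f : E → F) (μ : Measure E) : Prop :=
  ∀ i < k, ∀ M : E [×i]→L[ℝ] ℝ, ∫ y, M (fun _ => y) • f y ∂μ = 0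

theorem integrable_smul_of_norm_le_japaneseBracket_pow [FiniteDimensional ℝ E] [BorelSpace E]
    [μ.IsAddHaarMeasure] {s B C₀ : ℝ} (hs : finrank ℝ E + k < s) {g : E → ℝ} (hg : Continuous g)
    (hgB : ∀ y, ‖g y‖ ≤ B * japaneseBracket y ^ k) (hf : AEStronglyMeasurable f μ)
    (hfC : ∀ᵐ y ∂μ, ‖f y‖ ≤ C₀ * japaneseBracket y ^ (-s)) :
    Integrable (fun y => g y • f y) μ := by
  have hmajorant := integrable_japaneseBracket_rpow_neg (μ := μ) (lt_sub_iff_add_lt.2 hs)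
  refine (hmajorant.const_mul (B * C₀)).mono' (hg.aestronglyMeasurable.smul hf) ?_
  filter_upwards [hfC] with y hy
  calc ‖g y • f y‖ = ‖g y‖ * ‖f y‖ := norm_smul _ _
    _ ≤ B * japaneseBracket y ^ k * (C₀ * japaneseBracket y ^ (-s)) :=
        mul_le_mul (hgB y) hy (norm_nonneg _) ((norm_nonneg _).trans (hgB y))
    _ = B * C₀ * japaneseBracket y ^ (-(s - k)) := by
        rw [mul_mul_mul_comm, japaneseBracket_pow_mul_rpow_neg]

theorem integrable_multilinear_diag_smul [FiniteDimensional ℝ E] [BorelSpace E]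
    [μ.IsAddHaarMeasure] {s C₀ : ℝ} (hs : finrank ℝ E + k < s) (hf : AEStronglyMeasurable f μ)
    (hfC : ∀ᵐ y ∂μ, ‖f y‖ ≤ C₀ * japaneseBracket y ^ (-s)) {i : ℕ} (hi : i ≤ k)
    (M : E [×i]→L[ℝ] ℝ) : Integrable (fun y => M (fun _ => y) • f y) μ := by
  refine integrable_smul_of_norm_le_japaneseBracket_pow hs
    (M.cont.comp (continuous_pi fun _ => continuous_id)) (fun y => ?_) hf hfC (B := ‖M‖)
  calc ‖M fun _ => y‖ ≤ ‖M‖ * ‖y‖ ^ i := by simpa using M.le_opNorm fun _ => y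
    _ ≤ ‖M‖ * japaneseBracket y ^ k := by gcongr; exact norm_pow_le_japaneseBracket_pow hi y

theorem HasVanishingMoments.integral_partialSum_smul (hmom : HasVanishingMoments k f μ)
    (p : FormalMultilinearSeries ℝ E ℝ)
    (hint : ∀ i < k, Integrable (fun y => p i (fun _ => y) • f y) μ) :
    ∫ y, p.partialSum k y • f y ∂μ = 0 := by
  simp_rw [FormalMultilinearSeries.partialSum, Finset.sum_smul]
  rw [integral_finsetSum _ fun i hi => hint i (Finset.mem_range.1 hi)]
  exact Finset.sum_eq_zero fun i hi => hmom i (Finset.mem_range.1 hi) (p i)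

end Moments

section Coordinates

variable {ι : Type*} [Fintype ι]

theorem prod_pow_card_fiber {κ M : Type*} [Fintype κ] [DecidableEq ι] [CommMonoid M] (r : κ → ι)
    (y : ι → M) : ∏ l, y l ^ (Finset.univ.filter fun j => r j = l).card = ∏ j, y (r j) := by
  simp_rw [← Finset.prod_fiberwise' Finset.univ r y, Finset.prod_const]

theorem multilinear_diag_eq_sum_monomials [DecidableEq ι] {i : ℕ}
    (M : EuclideanSpace ℝ ι [×i]→L[ℝ] ℝ) (y : EuclideanSpace ℝ ι) :
    M (fun _ => y) = ∑ r : Fin i → ι, M (fun j => EuclideanSpace.single (r j) 1) *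
      ∏ l, y l ^ (Finset.univ.filter fun j => r j = l).card := by
  have hy : y = ∑ l, y l • EuclideanSpace.single l (1 : ℝ) := by
    simpa using ((EuclideanSpace.basisFun ι ℝ).sum_repr y).symm
  conv_lhs => rw [hy]
  rw [M.map_sum]
  refine Finset.sum_congr rfl fun r _ => ?_
  rw [M.map_smul_univ, smul_eq_mul, mul_comm, prod_pow_card_fiber r fun l => y l]

theorem abs_monomial_le_norm_pow (α : ι → ℕ) (y : EuclideanSpace ℝ ι) :
    |∏ l, y l ^ α l| ≤ ‖y‖ ^ ∑ l, α l := by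
  rw [Finset.abs_prod, ← Finset.prod_pow_eq_pow_sum]
  simp_rw [abs_pow]
  exact Finset.prod_le_prod (fun _ _ => by positivity) fun l _ =>
    pow_le_pow_left₀ (abs_nonneg _) (PiLp.norm_apply_le y l) _

theorem hasVanishingMoments_of_monomials {F : Type*} [NormedAddCommGroup F] [NormedSpace ℝ F]
    {μ : Measure (EuclideanSpace ℝ ι)} {f : EuclideanSpace ℝ ι → F} {k : ℕ}
    (hint : ∀ α : ι → ℕ, ∑ l, α l < k → Integrable (fun y => (∏ l, y l ^ α l) • f y) μ)
    (hmom : ∀ α : ι → ℕ, ∑ l, α l < k → ∫ y, (∏ l, y l ^ α l) • f y ∂μ = 0) :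
    HasVanishingMoments k f μ := by
  classical
  intro i hi M
  have hdegree (r : Fin i → ι) :
      ∑ l, (Finset.univ.filter fun j => r j = l).card < k := by
    rw [← Finset.card_eq_sum_card_fiberwise (f := r) fun _ _ => by simp]
    simpa using hi
  have hterm (r : Fin i → ι) :
      Integrable (fun y => M (fun j => EuclideanSpace.single (r j) 1) •
        (∏ l, y l ^ (Finset.univ.filter fun j => r j = l).card) • f y) μ :=
    (hint _ (hdegree r)).smul _
  simp_rw [multilinear_diag_eq_sum_monomials M, Finset.sum_smul, mul_smul]
  rw [integral_finsetSum _ fun r _ => hterm r]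
  refine Finset.sum_eq_zero fun r _ => ?_
  rw [integral_smul, hmom _ (hdegree r), smul_zero]

end Coordinates

section Decay

variable {E : Type*} [NormedAddCommGroup E] [InnerProductSpace ℝ E] [FiniteDimensional ℝ E]
  [MeasurableSpace E] [BorelSpace E] [Nontrivial E] {μ : Measure E} [μ.IsAddHaarMeasure]
  {a s : ℝ} {k : ℕ}

theorem exists_integral_majorant_le (ha : a < finrank ℝ E) (hs : finrank ℝ E + k < s) :
    ∃ C > 0, ∀ x : E,
      Integrable (fun y => japaneseBracket x ^ (-a - k) * japaneseBracket y ^ (-(s - k)) +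
        japaneseBracket x ^ (-s) * truncatedKernel a (japaneseBracket x) (x - y)) μ ∧
      ∫ y, japaneseBracket x ^ (-a - k) * japaneseBracket y ^ (-(s - k)) +
        japaneseBracket x ^ (-s) * truncatedKernel a (japaneseBracket x) (x - y) ∂μ ≤
          C * japaneseBracket x ^ (-a - k) := by
  have hweight := integrable_japaneseBracket_rpow_neg (μ := μ) (lt_sub_iff_add_lt.2 hs)
  set D := ∫ y : E, japaneseBracket y ^ (-(s - k)) ∂μ
  set I := ∫ z : E, truncatedKernel a 1 z ∂μ
  have hD : 0 ≤ D := integral_nonneg fun y => Real.rpow_nonneg (japaneseBracket_pos y).le _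
  have hI : 0 ≤ I := integral_nonneg fun z => truncatedKernel_nonneg a 1 z
  refine ⟨D + I + 1, by positivity, fun x => ?_⟩
  have hJx := japaneseBracket_pos x
  have hone := one_le_japaneseBracket x
  set X := japaneseBracket x
  have hkernel : Integrable (fun y => truncatedKernel a X (x - y)) μ :=
    (integrable_truncatedKernel ha X).comp_sub_left x
  refine ⟨(hweight.const_mul _).add (hkernel.const_mul _), ?_⟩
  have hexponent : X ^ (-s) * X ^ (finrank ℝ E - a) ≤ X ^ (-a - k) := by
    rw [← Real.rpow_add hJx]
    exact Real.rpow_le_rpow_of_exponent_le hone (by linarith)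
  rw [integral_add (hweight.const_mul _) (hkernel.const_mul _), integral_const_mul,
    integral_const_mul, integral_sub_left_eq_self (truncatedKernel a X) μ x,
    integral_truncatedKernel a hJx]
  calc X ^ (-a - k) * D + X ^ (-s) * (X ^ (finrank ℝ E - a) * I)
      = D * X ^ (-a - k) + I * (X ^ (-s) * X ^ (finrank ℝ E - a)) := by ring
    _ ≤ D * X ^ (-a - k) + I * X ^ (-a - k) := by gcongr
    _ = (D + I) * X ^ (-a - k) := by ring
    _ ≤ (D + I + 1) * X ^ (-a - k) :=
        mul_le_mul_of_nonneg_right (lt_add_one _).le (by positivity)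

variable {F : Type*} [NormedAddCommGroup F] [NormedSpace ℝ F]

theorem exists_norm_integral_norm_sub_rpow_neg_smul_le (ha : a < finrank ℝ E) (hak : 0 ≤ a + k)
    (hs : finrank ℝ E + k < s) :
    ∃ C > 0, ∀ C₀ ≥ 0, ∀ f : E → F, AEStronglyMeasurable f μ →
      (∀ᵐ y ∂μ, ‖f y‖ ≤ C₀ * japaneseBracket y ^ (-s)) → HasVanishingMoments k f μ →
      ∀ x, ‖∫ y, ‖x - y‖ ^ (-a) • f y ∂μ‖ ≤ C * C₀ * japaneseBracket x ^ (-a - k) := by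
  obtain ⟨A, hA, hpointwise⟩ := exists_abs_kernel_sub_partialSum_mul_le (E := E) hak
    (show 0 ≤ s from le_trans (by positivity) hs.le)
  obtain ⟨B, hB, hmajorant⟩ := exists_integral_majorant_le (μ := μ) ha hs
  refine ⟨A * B, by positivity, fun C₀ hC₀ f hf hfC hmom x => ?_⟩
  obtain ⟨p, hp⟩ := hpointwise x
  obtain ⟨hG, hGle⟩ := hmajorant x
  set G := fun y => japaneseBracket x ^ (-a - k) * japaneseBracket y ^ (-(s - k)) +
    japaneseBracket x ^ (-s) * truncatedKernel a (japaneseBracket x) (x - y)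
  have hterm : ∀ i < k, Integrable (fun y => p i (fun _ => y) • f y) μ := fun i hi =>
    integrable_multilinear_diag_smul hs hf hfC hi.le (p i)
  have hP : Integrable (fun y => p.partialSum k y • f y) μ := by
    simp_rw [FormalMultilinearSeries.partialSum, Finset.sum_smul]
    exact integrable_finsetSum _ fun i hi => hterm i (Finset.mem_range.1 hi)
  have hbound : ∀ᵐ y ∂μ, ‖(‖x - y‖ ^ (-a) - p.partialSum k y) • f y‖ ≤ A * C₀ * G y := by
    filter_upwards [hfC] with y hy
    calc ‖(‖x - y‖ ^ (-a) - p.partialSum k y) • f y‖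
        ≤ |‖x - y‖ ^ (-a) - p.partialSum k y| * (C₀ * japaneseBracket y ^ (-s)) := by
          rw [norm_smul, Real.norm_eq_abs]
          gcongr
      _ = C₀ * (|‖x - y‖ ^ (-a) - p.partialSum k y| * japaneseBracket y ^ (-s)) := by ring
      _ ≤ C₀ * (A * G y) := mul_le_mul_of_nonneg_left (hp y) hC₀
      _ = A * C₀ * G y := by ring
  have hR : Integrable (fun y => (‖x - y‖ ^ (-a) - p.partialSum k y) • f y) μ := by
    have hkernel : Measurable fun y => ‖x - y‖ ^ (-a) := by fun_prop
    exact (hG.const_mul _).mono'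
      ((hkernel.sub (p.partialSum_continuous k).measurable).aestronglyMeasurable.smul hf) hbound
  calc ‖∫ y, ‖x - y‖ ^ (-a) • f y ∂μ‖
      = ‖∫ y, (‖x - y‖ ^ (-a) - p.partialSum k y) • f y ∂μ‖ := by
        rw [← add_zero (∫ y, (‖x - y‖ ^ (-a) - p.partialSum k y) • f y ∂μ),
          ← hmom.integral_partialSum_smul p hterm, ← integral_add hR hP]
        simp_rw [← add_smul, sub_add_cancel]
    _ ≤ ∫ y, A * C₀ * G y ∂μ := norm_integral_le_of_norm_le (hG.const_mul _) hbound
    _ ≤ A * C₀ * (B * japaneseBracket x ^ (-a - k)) := by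
        rw [integral_const_mul]
        gcongr
    _ = A * B * C₀ * japaneseBracket x ^ (-a - k) := by ring

end Decay

theorem stmt_3_general {ι F : Type*} [Fintype ι] [Nonempty ι] [NormedAddCommGroup F]
    [NormedSpace ℝ F] [CompleteSpace F] {a s : ℝ} {k : ℕ} (ha : a < Fintype.card ι)
    (hak : 0 ≤ a + k) (hs : Fintype.card ι + k < s) :
    ∃ C > 0, ∀ C₀ ≥ 0, ∀ f : EuclideanSpace ℝ ι → F, AEStronglyMeasurable f →
      (∀ᵐ y, ‖f y‖ ≤ C₀ * √(1 + ‖y‖ ^ 2) ^ (-s)) →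
      (∀ α : ι → ℕ, ∑ l, α l < k → ∫ y, (∏ l, y l ^ α l) • f y = 0) →
      ∀ x, ‖∫ y, ‖x - y‖ ^ (-a) • f y‖ ≤ C * C₀ * √(1 + ‖x‖ ^ 2) ^ (-a - k) := by
  rw [← finrank_euclideanSpace (𝕜 := ℝ)] at ha hs
  obtain ⟨C, hC, hdecay⟩ :=
    exists_norm_integral_norm_sub_rpow_neg_smul_le (F := F) (μ := volume) ha hak hs
  refine ⟨C, hC, fun C₀ hC₀ f hf hfC hmom => hdecay C₀ hC₀ f hf hfC ?_⟩
  refine hasVanishingMoments_of_monomials (fun α hα => ?_) hmom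
  refine integrable_smul_of_norm_le_japaneseBracket_pow hs (by fun_prop) (fun y => ?_) hf hfC
    (B := 1)
  exact (abs_monomial_le_norm_pow α y).trans
    ((norm_pow_le_japaneseBracket_pow hα.le y).trans_eq (one_mul _).symm)

/-- If `f` has decay `⟨y⟩^{2m−n−β}` and vanishing moments up to order `k₂−1`, then
`φ(x) = ∫ |x−y|^{k₂−ε−n} f(y) dy` satisfies `|φ(x)| ≤ C⟨x⟩^{-n−ε}`. -/
theorem stmt_3 (n m k₂ : ℕ) (hm : 1 ≤ m) (hn : 2 * m < n) (hk₂1 : 1 ≤ k₂) (hk₂2 : k₂ ≤ n)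
    (ε : ℝ) (hε1 : 0 < ε) (hε2 : ε < k₂) (β : ℝ) (hβ : 2 * (m : ℝ) + k₂ < β)
    (C₀ : ℝ) (hC₀ : 0 < C₀) :
    ∃ C > (0 : ℝ), ∀ f : EuclideanSpace ℝ (Fin n) → ℂ, Measurable f →
      (∀ᵐ y ∂(volume : Measure (EuclideanSpace ℝ (Fin n))),
        ‖f y‖ ≤ C₀ * Real.sqrt (1 + ‖y‖ ^ 2) ^ (2 * (m : ℝ) - n - β)) →
      (∀ α : Fin n → ℕ, (∑ i, α i) < k₂ →
        ∫ y, ((∏ i, (y i) ^ (α i) : ℝ) : ℂ) * f y = 0) →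
      ∀ x : EuclideanSpace ℝ (Fin n),
        ‖∫ y, ((‖x - y‖ ^ ((k₂ : ℝ) - ε - n) : ℝ) : ℂ) * f y‖ ≤
          C * Real.sqrt (1 + ‖x‖ ^ 2) ^ (-(n : ℝ) - ε) := by
  have : NeZero n := ⟨by omega⟩
  obtain ⟨C, hC, hdecay⟩ := stmt_3_general (ι := Fin n) (F := ℂ) (a := n - k₂ + ε)
    (s := n + β - 2 * m) (k := k₂) (by simpa using by linarith) (by linarith)
    (by simpa using by linarith)
  simp only [← Complex.real_smul]
  rw [show 2 * (m : ℝ) - n - β = -(n + β - 2 * m) by ring,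
    show (k₂ : ℝ) - ε - n = -(n - k₂ + ε) by ring,
    show -(n : ℝ) - ε = -(n - k₂ + ε) - k₂ by ring]
  exact ⟨C * C₀, by positivity, fun f hf hfC hmom =>
    hdecay C₀ hC₀.le f hf.aestronglyMeasurable hfC hmom⟩
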